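/- Suppose α², β², γ² are the three roots of the cubic u³ - (33/(n+20))u² + (231/((n+16)(n+20)))u - 231/((n+12)(n+16)(n+20)) = 0 for an integer n ≥ 439, and suppose αβγ ∈ ℚ. Then there exists an integer y with (n+12)(n+16)(n+20) = 231y². Moreover, with M = 231²y and N = 231(n+16), one has N(N² - 462²) = M². -/

import Mathlib

/-!
Comparing the product of the roots with the rationality of `αβγ` shows that
`P = (n + 12)(n + 16)(n + 20)` is `231 y²` for some integer `y` (`exists_eq_231_mul_sq`).
Since `231³ m (m² - 16) = 231⁴ y²` for `m = n + 16`, the identity satisfied by `N = 231 m` and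
`M = 231² y` is `N (N² - 924²) = M²`, and not the one with `462²`, which it would contradict.
The conclusion therefore holds only because `n` as in the hypotheses does not exist:
`no_large_point` says that `(m - 4) m (m + 4) = 231 y²` has no solution with `m ≥ 455`.

The proof of `no_large_point` is a `2`-descent. Apart from powers of `2` the three factors are
pairwise coprime, so each is a divisor of `231` times a square, and congruences modulo `3`, `7`
and `8` leave two systems.

* For `m` odd, `m - 4 = 3x²`, `m = 7y²`, `m + 4 = 11z²`, with the genuine solution `m = 7`.
  Put `w = m + 2`; then `w² - 77 (yz)² = 4`, so `w = C_k(9)` for the rescaled Chebyshev polynomial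
  `C_k` (`pell_77`). Congruences modulo `8` make `k` odd, and then
  `k = ±1 + 2 g 2^(s+1)` with `g` odd unless `k = ±1`. As `C_k + C_{±1}` is divisible by
  `D = C_{2^(s+1)}(9)`, it follows that `D ∣ 3 (x² + 5)`, while `D ≡ 3 (mod 4)` and
  `D ≡ 4 (mod 5)` give the Jacobi symbol `(-5 / D) = -1` (`no_simul_77`).
* For `m = 8A + 4`, the numbers `A`, `2A + 1`, `A + 1` are `231x²`, `y²`, `z²`. With `y = 2r + 1`
  this gives the primitive Pythagorean triple `r² + (r + 1)² = z²`, and its parametrisation turns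
  `r (r + 1) = 462 w²` into `e q (e + q) (e + 2q) = 231 w²` with `e² - 2q² = 1`. Splitting again
  into classes modulo squares shows that `e` is a square, and `E⁴ - 2q² = 1` forces `q = 0`
  (`descent`, `no_simul_231`).
-/

/-! ### Chebyshev values and a Pell equation -/

open Polynomial in
/-- `C_j` is an odd polynomial for odd `j`, and `C_{jM} = C_j ∘ C_M`. -/
theorem C_dvd_C_of_odd (P M j : ℤ) (hj : Odd j) :
    (Chebyshev.C ℤ M).eval P ∣ (Chebyshev.C ℤ (j * M)).eval P := by
  have h := sub_dvd_eval_sub ((Chebyshev.C ℤ M).eval P) 0 (Chebyshev.C ℤ j)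
  have h0 : (Chebyshev.C ℤ j).eval 0 = 0 := by
    have h1 := congrArg (eval 0) (Chebyshev.C_comp_two_mul_X ℤ j)
    simpa [eval_comp, Chebyshev.T_eval_zero_of_odd ℤ hj] using h1
  rw [h0, sub_zero, sub_zero] at h
  rwa [Chebyshev.C_mul, eval_comp]

/-- Here `(-5 / D) = (-1 / D) (D / 5) = -1`, by quadratic reciprocity. -/
theorem not_dvd_sq_add_five (D x : ℤ) (hD : 0 < D) (h4 : D % 4 = 3) (h5 : D % 5 = 4) :
    ¬ D ∣ x ^ 2 + 5 := by
  intro h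
  lift D to ℕ using hD.le
  have hodd : Odd D := by rw [Nat.odd_iff]; omega
  have h1 : jacobiSym (-5) D = jacobiSym (x ^ 2) D := by
    apply jacobiSym.mod_left'
    exact ((Int.modEq_iff_dvd).2 (by simpa using h))
  have h2 : jacobiSym 5 D = 1 := by
    have := jacobiSym.quadratic_reciprocity_one_mod_four (a := 5) (b := D) (by norm_num) hodd
    rw [show ((5 : ℕ) : ℤ) = 5 by norm_num] at this
    rw [this, jacobiSym.mod_left, show ((D : ℤ) % ((5 : ℕ) : ℤ)) = 4 by exact_mod_cast h5]
    norm_num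
  rw [jacobiSym.neg _ hodd, ZMod.χ₄_nat_three_mod_four (by omega), jacobiSym.pow_left, h2] at h1
  nlinarith [sq_nonneg (jacobiSym x D)]

theorem exists_two_pow_mul_odd (k : ℤ) (hk : k ≠ 0) :
    ∃ (s : ℕ) (g : ℤ), Odd g ∧ k = g * 2 ^ s := by
  obtain ⟨s, m, hm, h⟩ := Nat.exists_eq_two_pow_mul_odd (Int.natAbs_ne_zero.2 hk)
  have hm' : Odd (m : ℤ) := by exact_mod_cast hm
  have h' : (k.natAbs : ℤ) = 2 ^ s * m := by exact_mod_cast h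
  rcases Int.natAbs_eq k with hk' | hk'
  · exact ⟨s, m, hm', by rw [hk', h']; ring⟩
  · exact ⟨s, -m, hm'.neg, by rw [hk', h']; ring⟩

open Polynomial in
/-- The residues modulo `60` encode `C_{2^(s+1)}(9) ≡ 3 (mod 4)`, `≡ ±1 (mod 3)`, `≡ 4 (mod 5)`. -/
theorem C_two_pow (s : ℕ) :
    0 < (Chebyshev.C ℤ (2 ^ (s + 1))).eval 9 ∧ (Chebyshev.C ℤ (2 ^ (s + 1))).eval 9 % 60 = 19 ∨
      0 < (Chebyshev.C ℤ (2 ^ (s + 1))).eval 9 ∧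
      (Chebyshev.C ℤ (2 ^ (s + 1))).eval 9 % 60 = 59 := by
  induction s with
  | zero => simp [Chebyshev.C_two]
  | succ s ih =>
    have h : (Chebyshev.C ℤ (2 ^ (s + 1 + 1))).eval 9
        = ((Chebyshev.C ℤ (2 ^ (s + 1))).eval 9) ^ 2 - 2 := by
      rw [pow_succ' 2 (s + 1), Chebyshev.C_mul, eval_comp, Chebyshev.C_two]
      simp
    rw [h]
    generalize (Chebyshev.C ℤ (2 ^ (s + 1))).eval 9 = t at *
    rcases ih with ⟨h0, h⟩ | ⟨h0, h⟩ <;>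
      have ht : 19 ≤ t := by omega
    all_goals exact Or.inr ⟨by nlinarith, by simp [Int.sub_emod, Int.mul_emod, pow_two, h]⟩

open Polynomial in
/-- Solutions of `w² - 77 v² = 4` are powers of the unit `(9 + √77) / 2`: multiplication by its
inverse takes a solution with `v > 0` to one with smaller `v`. The second coordinate is recorded
through two consecutive values of `C`, which is what the induction needs. -/
theorem pell_77 (v : ℕ) : ∀ w : ℤ, 0 < w → w ^ 2 - 77 * (v : ℤ) ^ 2 = 4 →
    ∃ k : ℕ, w = (Chebyshev.C ℤ k).eval 9 ∧
      77 * (v : ℤ) = 2 * (Chebyshev.C ℤ (k + 1)).eval 9 - 9 * (Chebyshev.C ℤ k).eval 9 := by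
  induction v using Nat.strong_induction_on with
  | _ v ih =>
    intro w hw h
    rcases Nat.eq_zero_or_pos v with rfl | hv
    · have : w = 2 := by push_cast at h; nlinarith
      exact ⟨0, by simp [this], by simp⟩
    · have hv' : (1 : ℤ) ≤ v := by exact_mod_cast hv
      have hpar : (w + v) % 2 = 0 := by
        have h2 : (w ^ 2 - 77 * (v : ℤ) ^ 2) % 2 = 0 := by rw [h]; rfl
        rcases Int.emod_two_eq_zero_or_one w with a | a <;>
          rcases Int.emod_two_eq_zero_or_one (v : ℤ) with b | b <;>
          simp [Int.sub_emod, Int.mul_emod, pow_two, a, b] at h2 <;> omega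
      obtain ⟨r, hr⟩ : ∃ r, 9 * (v : ℤ) - w = 2 * r := ⟨(9 * (v : ℤ) - w) / 2, by omega⟩
      have h1 : 0 ≤ r := by nlinarith
      have h2 : r < v := by nlinarith
      lift r to ℕ using h1
      obtain ⟨q, hq⟩ : ∃ q, 9 * w - 77 * (v : ℤ) = 2 * q := ⟨(9 * w - 77 * (v : ℤ)) / 2, by omega⟩
      obtain ⟨k, hk1, hk2⟩ := ih r (by omega) q (by nlinarith) (by
        obtain rfl : w = 9 * v - 2 * r := by linarith
        obtain rfl : q = 2 * v - 9 * r := by linarith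
        linarith)
      have hC := congrArg (eval 9) (Chebyshev.C_add_two ℤ k)
      simp only [eval_sub, eval_mul, eval_X] at hC
      refine ⟨k + 1, ?_, ?_⟩
      · push_cast
        linarith
      · push_cast
        rw [show (k : ℤ) + 1 + 1 = k + 2 by ring, hC]
        linarith

/-! ### Divisors of 231 modulo squares -/

/-- If coprime `A`, `B` multiply to `D w²`, then each of them is a divisor of `D` times a square;
no squarefreeness of `D` is needed, since `D = gcd(D, A) gcd(D, B)`. -/
theorem coprime_split {A B D w : ℕ} (hD : 0 < D) (hc : A.Coprime B) (h : A * B = D * w ^ 2) :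
    ∃ a b x y, a * b = D ∧ A = a * x ^ 2 ∧ B = b * y ^ 2 ∧ x * y = w := by
  have hg : D.gcd A * D.gcd B = D := by
    rw [← Nat.Coprime.gcd_mul D hc, h]; simp
  obtain ⟨A', hA⟩ := Nat.gcd_dvd_right D A
  obtain ⟨B', hB⟩ := Nat.gcd_dvd_right D B
  have h' : A' * B' = w ^ 2 := by
    apply Nat.eq_of_mul_eq_mul_left hD
    calc D * (A' * B') = (D.gcd A * A') * (D.gcd B * B') := by
          nth_rw 1 [← hg]; ring
      _ = D * w ^ 2 := by rw [← hA, ← hB, h]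
  have hc' : IsCoprime (A' : ℤ) (B' : ℤ) := Nat.isCoprime_iff_coprime.2
    ((hc.coprime_dvd_left ⟨_, (hA.trans (mul_comm _ _))⟩).coprime_dvd_right
      ⟨_, (hB.trans (mul_comm _ _))⟩)
  obtain ⟨x, hx⟩ := exists_eq_pow_of_mul_eq_pow (Nat.isUnit_iff.2 (Nat.isCoprime_iff_coprime.1 hc')) h'
  obtain ⟨y, hy⟩ := exists_eq_pow_of_mul_eq_pow
    (Nat.isUnit_iff.2 (Nat.isCoprime_iff_coprime.1 hc').symm) ((mul_comm _ _).trans h')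
  refine ⟨_, _, x, y, hg, by rw [← hx]; exact hA, by rw [← hy]; exact hB, ?_⟩
  rw [hx, hy, ← mul_pow] at h'
  exact Nat.pow_left_injective (by norm_num : 2 ≠ 0) h'

theorem coprime_split_three {A B C w : ℕ} (hAB : A.Coprime B) (hAC : A.Coprime C)
    (hBC : B.Coprime C) (h : A * B * C = 231 * w ^ 2) :
    ∃ a b c x y z, a * b * c = 231 ∧ A = a * x ^ 2 ∧ B = b * y ^ 2 ∧ C = c * z ^ 2 := by
  obtain ⟨d, c, u, z, hd, hu, hC, -⟩ := coprime_split (by norm_num) (hAC.mul_left hBC) h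
  have hd0 : 0 < d := Nat.pos_of_ne_zero (by rintro rfl; simp at hd)
  obtain ⟨a, b, x, y, hab, hA, hB, -⟩ := coprime_split hd0 hAB hu
  exact ⟨a, b, c, x, y, z, by rw [hab, hd], hA, hB, hC⟩

theorem dvd_231 {d : ℕ} (hd : d ∣ 231) :
    d ∈ ([1, 3, 7, 11, 21, 33, 77, 231] : List ℕ) := by
  have : d ∈ Nat.divisors 231 := by simp [hd]
  rw [show Nat.divisors 231 = {1, 3, 7, 11, 21, 33, 77, 231} by decide +kernel] at this
  simpa using this

theorem sq_residues (x : ℕ) : (x ^ 2 % 8 = 0 ∨ x ^ 2 % 8 = 1 ∨ x ^ 2 % 8 = 4) ∧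
    (x ^ 2 % 3 = 0 ∨ x ^ 2 % 3 = 1) ∧
    (x ^ 2 % 7 = 0 ∨ x ^ 2 % 7 = 1 ∨ x ^ 2 % 7 = 2 ∨ x ^ 2 % 7 = 4) := by
  refine ⟨?_, ?_, ?_⟩
  · have : x % 8 < 8 := Nat.mod_lt _ (by norm_num)
    rw [Nat.pow_mod]; interval_cases x % 8 <;> simp
  · have : x % 3 < 3 := Nat.mod_lt _ (by norm_num)
    rw [Nat.pow_mod]; interval_cases x % 3 <;> simp
  · have : x % 7 < 7 := Nat.mod_lt _ (by norm_num)
    rw [Nat.pow_mod]; interval_cases x % 7 <;> simp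

theorem coprime_of_add_two_pow {A B : ℕ} (k : ℕ) (hA : A % 2 = 1) (h : A + 2 ^ k = B) :
    A.Coprime B := by
  subst h
  have : A.Coprime (2 ^ k) := Nat.Coprime.pow_right _ (Nat.coprime_two_right.2 (Nat.odd_iff.2 hA))
  simpa using this

set_option synthInstance.maxSize 1024 in
set_option synthInstance.maxHeartbeats 400000 in
/-- Of the classes modulo squares for `(A, A + 4, A + 8)` only `(3, 7, 11)` survives congruences
modulo `3`, `7` and `8`; it cannot be excluded, as `A = 3` is a solution. -/
theorem case_gap_four {A w : ℕ} (hA : A % 2 = 1) (h : A * (A + 4) * (A + 8) = 231 * w ^ 2) :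
    ∃ x y z, A = 3 * x ^ 2 ∧ A + 4 = 7 * y ^ 2 ∧ A + 8 = 11 * z ^ 2 := by
  have h1 : A.Coprime (A + 4) := coprime_of_add_two_pow 2 hA rfl
  have h2 : A.Coprime (A + 8) := coprime_of_add_two_pow 3 hA rfl
  have h3 : (A + 4).Coprime (A + 8) := coprime_of_add_two_pow 2 (by omega) rfl
  obtain ⟨a, b, c, x, y, z, habc, hx, hy, hz⟩ := coprime_split_three h1 h2 h3 h
  have key :
    ∀ a ∈ ([1, 3, 7, 11, 21, 33, 77, 231] : List ℕ),
    ∀ b ∈ ([1, 3, 7, 11, 21, 33, 77, 231] : List ℕ),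
    ∀ c ∈ ([1, 3, 7, 11, 21, 33, 77, 231] : List ℕ),
      a * b * c = 231 → a = 3 ∧ b = 7 ∨ ∃ ℓ ∈ ([3, 7, 8] : List ℕ), ∀ x < ℓ, ∀ y < ℓ, ∀ z < ℓ,
        ¬ ((ℓ = 8 → a * x ^ 2 % 2 = 1) ∧
          (a * x ^ 2 + 4) % ℓ = b * y ^ 2 % ℓ ∧ (a * x ^ 2 + 8) % ℓ = c * z ^ 2 % ℓ) := by
    decide +kernel
  have hmem := key a (dvd_231 ⟨b * c, by rw [← habc]; ring⟩) b (dvd_231 ⟨a * c, by rw [← habc]; ring⟩)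
    c (dvd_231 ⟨a * b, by rw [← habc]; ring⟩) habc
  rcases hmem with ⟨rfl, rfl⟩ | ⟨ℓ, hℓ, hno⟩
  · obtain rfl : c = 11 := by omega
    exact ⟨x, y, z, hx, hy, hz⟩
  · have hpos : 0 < ℓ := by
      simp only [List.mem_cons, List.not_mem_nil, or_false] at hℓ
      omega
    refine absurd ⟨?_, ?_, ?_⟩ (hno _ (Nat.mod_lt x hpos) _ (Nat.mod_lt y hpos) _ (Nat.mod_lt z hpos))
    · rintro rfl
      have hpm : a * (x % 8) ^ 2 ≡ a * x ^ 2 [MOD 2] :=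
        (((Nat.mod_modEq x 8).of_dvd (by norm_num)).pow 2).mul_left a
      rw [hpm, ← hx, hA]
    · refine Nat.ModEq.trans ?_ (((Nat.mod_modEq y ℓ).pow 2).mul_left b).symm
      rw [← hy, hx]
      exact (((Nat.mod_modEq x ℓ).pow 2).mul_left a).add_right _
    · refine Nat.ModEq.trans ?_ (((Nat.mod_modEq z ℓ).pow 2).mul_left c).symm
      rw [← hz, hx]
      exact (((Nat.mod_modEq x ℓ).pow 2).mul_left a).add_right _

set_option synthInstance.maxSize 1024 in
set_option synthInstance.maxHeartbeats 400000 in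
/-- Every class modulo squares for `(A, A + 1, A + 2)` is excluded by a congruence modulo `3`, `7`
or `8`. -/
theorem case_gap_one {A w : ℕ} (hA : A % 2 = 1) (h : A * (A + 1) * (A + 2) = 231 * w ^ 2) :
    False := by
  have h1 : A.Coprime (A + 1) := coprime_of_add_two_pow 0 hA rfl
  have h2 : A.Coprime (A + 2) := coprime_of_add_two_pow 1 hA rfl
  have h3 : (A + 1).Coprime (A + 2) :=
    Nat.coprime_self_add_right.2 (Nat.coprime_one_right _)
  obtain ⟨a, b, c, x, y, z, habc, hx, hy, hz⟩ := coprime_split_three h1 h2 h3 h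
  have key :
    ∀ a ∈ ([1, 3, 7, 11, 21, 33, 77, 231] : List ℕ),
    ∀ b ∈ ([1, 3, 7, 11, 21, 33, 77, 231] : List ℕ),
    ∀ c ∈ ([1, 3, 7, 11, 21, 33, 77, 231] : List ℕ),
      a * b * c = 231 → ∃ ℓ ∈ ([3, 7, 8] : List ℕ), ∀ x < ℓ, ∀ y < ℓ, ∀ z < ℓ,
        ¬ ((ℓ = 8 → a * x ^ 2 % 2 = 1) ∧
          (a * x ^ 2 + 1) % ℓ = b * y ^ 2 % ℓ ∧ (a * x ^ 2 + 2) % ℓ = c * z ^ 2 % ℓ) := by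
    decide +kernel
  have hmem := key a (dvd_231 ⟨b * c, by rw [← habc]; ring⟩) b (dvd_231 ⟨a * c, by rw [← habc]; ring⟩)
    c (dvd_231 ⟨a * b, by rw [← habc]; ring⟩) habc
  obtain ⟨ℓ, hℓ, hno⟩ := hmem
  have hpos : 0 < ℓ := by
    simp only [List.mem_cons, List.not_mem_nil, or_false] at hℓ
    omega
  refine hno _ (Nat.mod_lt x hpos) _ (Nat.mod_lt y hpos) _ (Nat.mod_lt z hpos) ⟨?_, ?_, ?_⟩
  · rintro rfl
    have hpm : a * (x % 8) ^ 2 ≡ a * x ^ 2 [MOD 2] :=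
      (((Nat.mod_modEq x 8).of_dvd (by norm_num)).pow 2).mul_left a
    rw [hpm, ← hx, hA]
  · refine Nat.ModEq.trans ?_ (((Nat.mod_modEq y ℓ).pow 2).mul_left b).symm
    rw [← hy, hx]
    exact (((Nat.mod_modEq x ℓ).pow 2).mul_left a).add_right _
  · refine Nat.ModEq.trans ?_ (((Nat.mod_modEq z ℓ).pow 2).mul_left c).symm
    rw [← hz, hx]
    exact (((Nat.mod_modEq x ℓ).pow 2).mul_left a).add_right _

/-- Of the classes modulo squares for `(A, 2A + 1, A + 1)` only `(231, 1, 1)`, that of `A = 0`,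
survives congruences modulo `3`, `7` and `8`. -/
theorem case_halves {A w : ℕ} (h : A * (2 * A + 1) * (A + 1) = 231 * w ^ 2) :
    ∃ x y z, A = 231 * x ^ 2 ∧ 2 * A + 1 = y ^ 2 ∧ A + 1 = z ^ 2 := by
  have h1 : A.Coprime (2 * A + 1) :=
    (Nat.coprime_mul_right_add_right A 1 2).2 (Nat.coprime_one_right _)
  have h2 : A.Coprime (A + 1) := by simp
  have h3 : (2 * A + 1).Coprime (A + 1) := by
    rw [show 2 * A + 1 = A + (A + 1) by ring]; simp
  obtain ⟨a, b, c, x, y, z, habc, hx, hy, hz⟩ := coprime_split_three h1 h2 h3 h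
  have key :
    ∀ a ∈ ([1, 3, 7, 11, 21, 33, 77, 231] : List ℕ),
    ∀ b ∈ ([1, 3, 7, 11, 21, 33, 77, 231] : List ℕ),
    ∀ c ∈ ([1, 3, 7, 11, 21, 33, 77, 231] : List ℕ),
      a * b * c = 231 → a = 231 ∧ b = 1 ∨ ∃ ℓ ∈ ([3, 7, 8] : List ℕ), ∀ x < ℓ, ∀ y < ℓ, ∀ z < ℓ,
        ¬ ((2 * (a * x ^ 2) + 1) % ℓ = b * y ^ 2 % ℓ ∧ (a * x ^ 2 + 1) % ℓ = c * z ^ 2 % ℓ) := by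
    decide +kernel
  have hmem := key a (dvd_231 ⟨b * c, by rw [← habc]; ring⟩) b (dvd_231 ⟨a * c, by rw [← habc]; ring⟩)
    c (dvd_231 ⟨a * b, by rw [← habc]; ring⟩) habc
  rcases hmem with ⟨rfl, rfl⟩ | ⟨ℓ, hℓ, hno⟩
  · obtain rfl : c = 1 := by omega
    exact ⟨x, y, z, hx, by simpa using hy, by simpa using hz⟩
  · have hpos : 0 < ℓ := by
      simp only [List.mem_cons, List.not_mem_nil, or_false] at hℓ
      omega
    refine absurd ⟨?_, ?_⟩ (hno _ (Nat.mod_lt x hpos) _ (Nat.mod_lt y hpos) _ (Nat.mod_lt z hpos))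
    · refine Nat.ModEq.trans ?_ (((Nat.mod_modEq y ℓ).pow 2).mul_left b).symm
      rw [← hy, hx]
      exact ((((Nat.mod_modEq x ℓ).pow 2).mul_left a).mul_left 2).add_right _
    · refine Nat.ModEq.trans ?_ (((Nat.mod_modEq z ℓ).pow 2).mul_left c).symm
      rw [← hz, hx]
      exact (((Nat.mod_modEq x ℓ).pow 2).mul_left a).add_right _

theorem four_dvd {q : ℤ} {b s : ℕ} (hb : b ∣ 231) (hq : q.natAbs = b * s ^ 2) (h2 : q % 2 = 0) :
    q % 4 = 0 := by
  have hb2 : ¬ 2 ∣ b := fun h => absurd (h.trans hb) (by norm_num)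
  have hs : 2 ∣ b * s ^ 2 := by omega
  have hs2 : 2 ∣ s :=
    Nat.prime_two.dvd_of_dvd_pow ((Nat.prime_two.dvd_mul.1 hs).resolve_left hb2)
  obtain ⟨t, rfl⟩ := hs2
  have : q.natAbs = 4 * (b * t ^ 2) := by rw [hq]; ring
  omega

/-- Since odd squares are `1` modulo `8`, the hypotheses give `e ≡ 1 (mod 4)`, hence `c ≡ 1 (mod 4)`. -/
theorem class_of_e {e q : ℤ} {c P E : ℕ} (hc : c ∣ 231) (hP : e + q = (P : ℤ) ^ 2)
    (hE : e = c * (E : ℤ) ^ 2) (hq : q % 4 = 0) (he2 : e % 2 = 1) (h7 : ¬ (7 : ℤ) ∣ e) :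
    c = 1 ∨ c = 33 := by
  have hP8 := (sq_residues P).1
  have hE8 := (sq_residues E).1
  zify at hP8 hE8
  have hc := dvd_231 hc
  simp only [List.mem_cons, List.not_mem_nil, or_false] at hc
  generalize (P : ℤ) ^ 2 = X at *
  generalize (E : ℤ) ^ 2 = Y at *
  have he4 : e % 4 = 1 := by omega
  clear hP hP8
  rcases hc with rfl | rfl | rfl | rfl | rfl | rfl | rfl | rfl <;> push_cast at hE <;> omega

/-- Modulo `3`: `e ≡ 0` and `e + q = P²` force `q ≡ 1`, hence `e + 2q ≡ 2`. -/
theorem no_class_33 {e q : ℤ} {b d P E s t : ℕ} (hbd : b = 1 ∧ d = 7 ∨ b = 7 ∧ d = 1)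
    (hp : 0 < e + q) (h : e ^ 2 - 2 * q ^ 2 = 1) (hP : e + q = (P : ℤ) ^ 2)
    (hE : e = 33 * (E : ℤ) ^ 2) (hq : q.natAbs = b * s ^ 2)
    (hd : (e + 2 * q).natAbs = d * t ^ 2) (hsign : 0 < q ∧ 0 < e + 2 * q ∨ q < 0 ∧ e + 2 * q < 0) :
    False := by
  have hP3 := (sq_residues P).2.1
  have ht3 := (sq_residues t).2.1
  have hs3 := (sq_residues s).2.1
  zify at hP3
  have hq3 : q % 3 ≠ 0 := by
    intro h0
    have h1 : e % 3 = 0 := by omega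
    have := congrArg (· % 3) h
    simp [Int.sub_emod, Int.mul_emod, pow_two, h0, h1] at this
  generalize (P : ℤ) ^ 2 = X at *
  generalize (E : ℤ) ^ 2 = Y at *
  generalize s ^ 2 = S at *
  generalize t ^ 2 = T at *
  clear h
  have hq1 : q % 3 = 1 := by omega
  clear hP hP3
  rcases hsign with ⟨u, v⟩ | ⟨u, v⟩ <;> rcases hbd with ⟨rfl, rfl⟩ | ⟨rfl, rfl⟩ <;> omega

/-! ### The system 231x², y², z² -/

/-- Here `E² = 4j + 1` and `j (2j + 1)` is a square, so that `j = g²`; then `E²` and `(2g)²` are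
consecutive squares. -/
theorem eq_zero_of_pow_four {E q : ℤ} (h : E ^ 4 - 2 * q ^ 2 = 1) : q = 0 := by
  have hE : E % 2 = 1 := by
    rcases Int.emod_two_eq_zero_or_one E with h0 | h0
    · have := congrArg (· % 2) h
      simp [Int.sub_emod, Int.mul_emod, pow_succ, h0] at this
    · exact h0
  obtain ⟨j, hj⟩ : ∃ j, E ^ 2 = 4 * j + 1 :=
    ⟨E ^ 2 / 4, by have := Int.sq_mod_four_eq_one_of_odd (Int.odd_iff.2 hE); omega⟩
  have h2 : 4 * (j * (2 * j + 1)) = q ^ 2 := by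
    have : E ^ 4 = (4 * j + 1) ^ 2 := by rw [← hj]; ring
    linarith
  obtain ⟨u, rfl⟩ : (2 : ℤ) ∣ q :=
    Int.prime_two.dvd_of_dvd_pow (n := 2) ⟨2 * (j * (2 * j + 1)), by rw [← h2]; ring⟩
  have h3 : j * (2 * j + 1) = u ^ 2 := by linarith
  have hj0 : 0 ≤ j := by have := sq_nonneg E; omega
  obtain ⟨g, hg⟩ := Int.sq_of_isCoprime (a := j) (b := 2 * j + 1) ⟨-2, 1, by ring⟩ h3
  have hg' : j = g ^ 2 := by
    rcases hg with hg | hg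
    · exact hg
    · have := sq_nonneg g
      have : j = 0 := by omega
      have : g ^ 2 = 0 := by omega
      omega
  have h4 : (|E| - 2 * |g|) * (|E| + 2 * |g|) = 1 := by
    have e1 := sq_abs E
    have e2 := sq_abs g
    linear_combination e1 - 4 * e2 + hj + 4 * hg'
  have h5 : g = 0 := by
    have := Int.eq_one_or_neg_one_of_mul_eq_one' h4
    have := abs_nonneg g
    have := abs_nonneg E
    have : |g| = 0 := by omega
    exact abs_eq_zero.1 this
  have : j = 0 := by rw [hg', h5]; rfl
  rw [this] at h3
  have : u = 0 := by simpa using h3.symm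
  rw [this]; rfl

/-- The four factors are pairwise coprime, so `e + q = a P²`, `e = c E²`, `|e + 2q| = d t²`,
`|q| = b s²` with `a b c d = 231`. Congruences force `a = c = 1`. -/
theorem descent {e q w : ℤ} (he : 0 < e) (h : e ^ 2 - 2 * q ^ 2 = 1)
    (hw : e * q * (e + q) * (e + 2 * q) = 231 * w ^ 2) : q = 0 := by
  have hp : 0 < e + q := by nlinarith
  have c1 : IsCoprime e (2 * q) := ⟨e, -q, by linear_combination h⟩
  have c2 : IsCoprime e q := c1.of_mul_right_right
  have d1 : IsCoprime (e + q) q := by simpa using c2.add_mul_right_left 1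
  have d2 : IsCoprime (e + q) e := by
    rw [add_comm]; simpa using c2.symm.add_mul_right_left 1
  have d3 : IsCoprime (e + q) (e + 2 * q) := by
    rw [show e + 2 * q = q + (e + q) * 1 by ring]; exact d1.add_mul_left_right 1
  have d4 : IsCoprime e (e + 2 * q) := by
    rw [show e + 2 * q = 2 * q + e * 1 by ring]; exact c1.add_mul_left_right 1
  have d5 : IsCoprime (e + 2 * q) q := c2.add_mul_right_left 2
  have hN : (e + q).natAbs * e.natAbs * (e + 2 * q).natAbs * q.natAbs = 231 * w.natAbs ^ 2 := by
    rw [← Int.natAbs_mul, ← Int.natAbs_mul, ← Int.natAbs_mul, ← Int.natAbs_pow,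
      show (231 : ℕ) = (231 : ℤ).natAbs from rfl, ← Int.natAbs_mul, ← hw]
    congr 1; ring
  rw [Int.isCoprime_iff_nat_coprime] at *
  obtain ⟨m, b, u, s, hm, hu, hq, -⟩ := coprime_split (by norm_num)
    ((d1.mul_left c2).mul_left d5) hN
  have hm0 : 0 < m := Nat.pos_of_ne_zero (by rintro rfl; simp at hm)
  obtain ⟨n, d, v, t, hn, hv, hd, -⟩ := coprime_split hm0 (d3.mul_left d4) hu
  have hn0 : 0 < n := Nat.pos_of_ne_zero (by rintro rfl; simp at hn; omega)
  obtain ⟨a, c, P, E, hac, hP, hE, -⟩ := coprime_split hn0 d2 hv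
  subst hac hn
  have hP' : e + q = a * (P : ℤ) ^ 2 := by
    have := congrArg (Nat.cast (R := ℤ)) hP
    rw [Int.natCast_natAbs, abs_of_pos hp] at this; exact_mod_cast this
  have hE' : e = c * (E : ℤ) ^ 2 := by
    have := congrArg (Nat.cast (R := ℤ)) hE
    rw [Int.natCast_natAbs, abs_of_pos he] at this; exact_mod_cast this
  -- For `ℓ ∈ {3, 7, 11}` dividing `e + q` the equation gives `q² ≡ -1 (mod ℓ)`.
  have n3 : ¬ (3 : ℤ) ∣ e + q := by
    intro hh
    have key : ∀ e q : ZMod 3, e ^ 2 - 2 * q ^ 2 = 1 → e + q ≠ 0 := by decide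
    exact key e q (by exact_mod_cast congrArg (Int.cast (R := ZMod 3)) h)
      (by exact_mod_cast (ZMod.intCast_zmod_eq_zero_iff_dvd (e + q) 3).2 hh)
  have n7 : ¬ (7 : ℤ) ∣ e + q := by
    intro hh
    have key : ∀ e q : ZMod 7, e ^ 2 - 2 * q ^ 2 = 1 → e + q ≠ 0 := by decide
    exact key e q (by exact_mod_cast congrArg (Int.cast (R := ZMod 7)) h)
      (by exact_mod_cast (ZMod.intCast_zmod_eq_zero_iff_dvd (e + q) 7).2 hh)
  have n11 : ¬ (11 : ℤ) ∣ e + q := by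
    intro hh
    have key : ∀ e q : ZMod 11, e ^ 2 - 2 * q ^ 2 = 1 → e + q ≠ 0 := by decide
    exact key e q (by exact_mod_cast congrArg (Int.cast (R := ZMod 11)) h)
      (by exact_mod_cast (ZMod.intCast_zmod_eq_zero_iff_dvd (e + q) 11).2 hh)
  have m7 : ¬ (7 : ℤ) ∣ e := by
    intro hh
    have key : ∀ e q : ZMod 7, e ^ 2 - 2 * q ^ 2 = 1 → e ≠ 0 := by decide
    exact key e q (by exact_mod_cast congrArg (Int.cast (R := ZMod 7)) h)
      (by exact_mod_cast (ZMod.intCast_zmod_eq_zero_iff_dvd e 7).2 hh)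
  have ha : a = 1 := by
    have := dvd_231 (d := a) ⟨c * d * b, by rw [← hm]; ring⟩
    simp only [List.mem_cons, List.not_mem_nil, or_false] at this
    clear hN hd hq hE hE' hm h hw
    rcases this with rfl | rfl | rfl | rfl | rfl | rfl | rfl | rfl <;> push_cast at hP' <;> omega
  subst ha
  have hq2 : q % 2 = 0 := by
    have key : ∀ e q : ZMod 8, e ^ 2 - 2 * q ^ 2 = 1 → 4 * q = 0 := by decide
    have := key e q (by exact_mod_cast congrArg (Int.cast (R := ZMod 8)) h)
    have : ((4 * q : ℤ) : ZMod 8) = 0 := by exact_mod_cast this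
    have := (ZMod.intCast_zmod_eq_zero_iff_dvd (4 * q) 8).1 this
    omega
  have he2 : e % 2 = 1 := by
    have key : ∀ e q : ZMod 2, e ^ 2 - 2 * q ^ 2 = 1 → e = 1 := by decide
    have := key e q (by exact_mod_cast congrArg (Int.cast (R := ZMod 2)) h)
    rw [← Int.odd_iff]
    exact ZMod.intCast_eq_one_iff_odd.1 this
  have hq4 := four_dvd (b := b) ⟨c * d, by rw [← hm]; ring⟩ hq hq2
  have hP1 : e + q = (P : ℤ) ^ 2 := by simpa using hP'
  rcases class_of_e (c := c) ⟨b * d, by rw [← hm]; ring⟩ hP1 hE' hq4 he2 m7 with rfl | rfl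
  · exact eq_zero_of_pow_four (E := E) (by rw [← h, hE']; push_cast; ring)
  · by_contra hq0
    have hsign : 0 < q ∧ 0 < e + 2 * q ∨ q < 0 ∧ e + 2 * q < 0 := by
      rcases lt_or_gt_of_ne hq0 with hneg | hpos
      · exact Or.inr ⟨hneg, by nlinarith⟩
      · exact Or.inl ⟨hpos, by linarith⟩
    have hbd7 : d * b = 7 := by
      have : 33 * (d * b) = 33 * 7 := by rw [← mul_assoc]; linarith
      omega
    have hbd : b = 1 ∧ d = 7 ∨ b = 7 ∧ d = 1 := by
      have hb : b ∣ 7 := ⟨d, by rw [← hbd7]; ring⟩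
      rcases (Nat.dvd_prime (by norm_num)).1 hb with rfl | rfl <;> omega
    exact no_class_33 hbd hp h hP1 (by exact_mod_cast hE') hq hd hsign

/-- With `r (r + 1) = 462 w²` and `r² + (r + 1)² = z²`, the odd leg is `m² - n²` and the even leg
is `2mn`. Their difference `±1` reads `e² - 2q² = 1` with `(e, q) = (m - n, n)` if `r` is even
and `(e, q) = (m + n, -m)` if `r` is odd. -/
theorem no_simul_231 {A x y z : ℕ} (hA : 0 < A) (h1 : A = 231 * x ^ 2)
    (h2 : 2 * A + 1 = y ^ 2) (h3 : A + 1 = z ^ 2) : False := by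
  obtain ⟨r, rfl⟩ : ∃ r, y = 2 * r + 1 := by
    rcases Nat.even_or_odd' y with ⟨r, rfl | rfl⟩
    · ring_nf at h2; omega
    · exact ⟨r, rfl⟩
  have hA2 : A = 2 * (r * (r + 1)) := by nlinarith
  obtain ⟨w, rfl⟩ : 2 ∣ x := by
    apply Nat.prime_two.dvd_of_dvd_pow (n := 2)
    omega
  have hr : r * (r + 1) = 462 * w ^ 2 := by nlinarith
  have hr0 : 0 < r := by
    rcases Nat.eq_zero_or_pos r with rfl | h
    · omega
    · exact h
  have hz : z ^ 2 = r ^ 2 + (r + 1) ^ 2 := by nlinarith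
  have hz0 : 0 < z := Nat.pos_of_ne_zero (by rintro rfl; omega)
  clear h1 h2 h3 hA2
  zify at hr hz hr0 hz0
  have hco : Int.gcd (r : ℤ) (r + 1) = 1 := by
    rw [← Int.isCoprime_iff_gcd_eq_one]; exact ⟨-1, 1, by ring⟩
  rcases Int.emod_two_eq_zero_or_one (r : ℤ) with hpar | hpar
  · have hpt : PythagoreanTriple ((r : ℤ) + 1) r z := by
      unfold PythagoreanTriple; linarith
    obtain ⟨m, n, hx, hy, -, -, -, hm⟩ := hpt.coprime_classification'
      (by rw [Int.gcd_comm]; exact hco) (by omega) hz0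
    have hm' : 0 < m := by
      rcases hm.lt_or_eq with h | h
      · exact h
      · rw [← h] at hy; omega
    have hn : 0 < n := by
      by_contra hn
      nlinarith
    have := descent (e := m - n) (q := n) (w := w) (by nlinarith) (by linarith)
      (by rw [hx, hy] at hr; linarith)
    omega
  · have hpt : PythagoreanTriple (r : ℤ) (r + 1) z := by
      unfold PythagoreanTriple; linarith
    obtain ⟨m, n, hx, hy, -, -, -, hm⟩ := hpt.coprime_classification' hco hpar hz0
    have hm' : 0 < m := by
      rcases hm.lt_or_eq with h | h
      · exact h
      · rw [← h] at hy; omega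
    have hn : 0 < n := by
      by_contra hn
      nlinarith
    have := descent (e := m + n) (q := -m) (w := w) (by linarith) (by linarith)
      (by rw [hy, hx] at hr; linarith)
    omega

/-! ### The system 3x², 7y², 11z² -/

open Polynomial in
/-- `A = 3`, that is `A + 6 = C_{±1}(9) = 9`, is the only solution. -/
theorem no_simul_77 {A x y z : ℕ} (hA : A % 2 = 1) (hA' : 3 < A) (h1 : A = 3 * x ^ 2)
    (h2 : A + 4 = 7 * y ^ 2) (h3 : A + 8 = 11 * z ^ 2) : False := by
  have hy8 := (sq_residues y).1
  have hY : (y : ℤ) ^ 2 % 8 = 1 := by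
    have : y ^ 2 % 8 = 1 := by omega
    exact_mod_cast this
  clear hy8
  zify at h1 h2 h3 hA hA'
  obtain ⟨k, hk, -⟩ := pell_77 (y * z) (A + 6) (by omega) (by
    push_cast
    rw [show 77 * ((y : ℤ) * z) ^ 2 = (7 * y ^ 2) * (11 * z ^ 2) by ring, ← h2, ← h3]
    ring)
  rcases Int.even_or_odd' (k : ℤ) with ⟨j, hj | hj⟩
  · -- For an even index `w + 2` is an odd square, so `w ≡ 7 (mod 8)`, while `w = 7 y² + 2 ≡ 1`.
    have hsq := congrArg (eval 9) (Chebyshev.C_mul_C ℤ j j)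
    rw [← two_mul, ← hj, sub_self, Chebyshev.C_zero, eval_mul, eval_add, ← hk] at hsq
    simp only [eval_ofNat] at hsq
    generalize (Chebyshev.C ℤ j).eval 9 = u at hsq
    have hu : u % 2 = 1 := by
      rcases Int.emod_two_eq_zero_or_one u with h | h
      · have := congrArg (· % 2) hsq
        simp [Int.mul_emod, h] at this
        omega
      · exact h
    have := Int.sq_mod_four_eq_one_of_odd (Int.odd_iff.2 hu)
    have : u * u % 4 = 1 := by rw [← pow_two]; exact this
    omega
  · -- `C` is even in its index, so the residue of `k` modulo `4` only selects a sign.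
    obtain ⟨e, he, i, hi⟩ : ∃ e : ℤ, (e = 1 ∨ e = -1) ∧ ∃ i, (k : ℤ) = e + 4 * i := by
      rcases Int.even_or_odd' j with ⟨i, hi | hi⟩
      · exact ⟨1, Or.inl rfl, i, by omega⟩
      · exact ⟨-1, Or.inr rfl, i + 1, by omega⟩
    have hCe : (Chebyshev.C ℤ e).eval 9 = 9 := by
      rcases he with rfl | rfl <;> simp
    have hi0 : i ≠ 0 := by
      rintro rfl
      rw [hi] at hk
      simp [hCe] at hk
      omega
    obtain ⟨s, g, hg, hig⟩ := exists_two_pow_mul_odd i hi0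
    have hprod := congrArg (eval 9)
      (Chebyshev.C_mul_C ℤ (e + g * 2 ^ (s + 1)) (g * 2 ^ (s + 1)))
    rw [show e + g * 2 ^ (s + 1) + g * 2 ^ (s + 1) = (k : ℤ) by rw [hi, hig]; ring,
      add_sub_cancel_right, eval_add, eval_mul, ← hk, hCe] at hprod
    have hdvd : (Chebyshev.C ℤ (2 ^ (s + 1))).eval 9 ∣ 3 * ((x : ℤ) ^ 2 + 5) := by
      rw [show 3 * ((x : ℤ) ^ 2 + 5) = A + 6 + 9 by linarith, ← hprod]
      exact (C_dvd_C_of_odd 9 _ g hg).mul_left _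
    have hD := C_two_pow s
    generalize (Chebyshev.C ℤ (2 ^ (s + 1))).eval 9 = D at hdvd hD
    have hD3 : IsCoprime D 3 := by
      refine ((Int.prime_three.coprime_iff_not_dvd).2 ?_).symm
      omega
    exact not_dvd_sq_add_five D x (by omega) (by omega) (by omega) (hD3.dvd_of_dvd_mul_left hdvd)

/-! ### Integral points -/

/-- The three cases are `m` odd, `m ≡ 0 (mod 4)` and `m ≡ 2 (mod 4)`. -/
theorem no_large_point {m y : ℤ} (hm : 455 ≤ m) : (m - 4) * m * (m + 4) ≠ 231 * y ^ 2 := by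
  intro h
  obtain ⟨A, hA⟩ : ∃ A : ℕ, m = A + 4 := ⟨(m - 4).toNat, by omega⟩
  subst hA
  have hN : A * (A + 4) * (A + 8) = 231 * y.natAbs ^ 2 := by
    zify
    rw [sq_abs, ← h]
    ring
  generalize y.natAbs = v at hN
  have hA : 451 ≤ A := by omega
  clear h hm
  have hmod : A % 2 = 1 ∨ A % 4 = 0 ∨ A % 4 = 2 := by omega
  rcases hmod with hA2 | hA4 | hA4
  · obtain ⟨x, y, z, h1, h2, h3⟩ := case_gap_four hA2 hN
    exact no_simul_77 hA2 (by omega) h1 h2 h3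
  · obtain ⟨B, rfl⟩ : ∃ B, A = 4 * B := ⟨A / 4, by omega⟩
    have h64 : 64 * (B * (B + 1) * (B + 2)) = 231 * v ^ 2 := by rw [← hN]; ring
    obtain ⟨v, rfl⟩ : 8 ∣ v := by
      rw [← Nat.pow_dvd_pow_iff (n := 2) (by norm_num)]
      exact Nat.Coprime.dvd_of_dvd_mul_left (by norm_num) ⟨_, h64.symm⟩
    have hB : B * (B + 1) * (B + 2) = 231 * v ^ 2 := by nlinarith
    rcases Nat.even_or_odd' B with ⟨C, hC | hC⟩
    · have h4 : 4 * (C * (2 * C + 1) * (C + 1)) = 231 * v ^ 2 := by rw [← hB, hC]; ring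
      obtain ⟨v, rfl⟩ : 2 ∣ v := by
        rw [← Nat.pow_dvd_pow_iff (n := 2) (by norm_num)]
        exact Nat.Coprime.dvd_of_dvd_mul_left (by norm_num) ⟨_, h4.symm⟩
      obtain ⟨x, y, z, h1, h2, h3⟩ :=
        case_halves (A := C) (w := v) (by nlinarith)
      exact no_simul_231 (by omega) h1 h2 h3
    · exact case_gap_one (by omega) hB
  · -- The left-hand side is `8` times an odd number, an odd power of `2`.
    obtain ⟨s, rfl⟩ : ∃ s, A = 4 * s + 2 := ⟨A / 4, by omega⟩
    have h8 : 8 * ((2 * s + 1) * (2 * s + 3) * (2 * s + 5)) = 231 * v ^ 2 := by rw [← hN]; ring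
    obtain ⟨v, rfl⟩ : 2 ∣ v := by
      apply Nat.prime_two.dvd_of_dvd_pow (n := 2)
      omega
    have h2 : 2 * ((2 * s + 1) * (2 * s + 3) * (2 * s + 5)) = 231 * v ^ 2 := by nlinarith
    have hodd : (2 * s + 1) * (2 * s + 3) * (2 * s + 5) % 2 = 1 := by
      simp [Nat.mul_mod, Nat.add_mod]
    have := (sq_residues v).1
    omega

/-- Here `231 P = (r P)²` is the square of a rational, hence of an integer, and `231` is
squarefree. -/
theorem exists_eq_231_mul_sq {P : ℤ} {r : ℚ} (hr : r ^ 2 * P = 231) : ∃ y : ℤ, P = 231 * y ^ 2 := by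
  have hsq : IsSquare (231 * P) := by
    rw [← Rat.isSquare_intCast_iff]
    exact ⟨r * P, by push_cast; rw [← hr]; ring⟩
  obtain ⟨z, hz⟩ := hsq
  have hdvd : ∀ p : ℕ, p.Prime → (p : ℤ) ∣ 231 → (p : ℤ) ∣ z := fun p hp hp' =>
    Int.Prime.dvd_pow' (k := 2) hp (by rw [pow_two, ← hz]; exact hp'.mul_right P)
  have h3 := hdvd 3 (by norm_num) (by norm_num)
  have h7 := hdvd 7 (by norm_num) (by norm_num)
  have h11 := hdvd 11 (by norm_num) (by norm_num)
  obtain ⟨y, rfl⟩ : (231 : ℤ) ∣ z := by omega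
  exact ⟨y, by linarith⟩


/-- Reduction of the tight harmonic index `{12,8,4}` design problem to integral points
on the elliptic curve `N(N² - 462²) = M²`. -/
theorem mordell_reduction_1284 (n : ℤ) (hn : 439 ≤ n) (α β γ : ℝ)
    (h1 : α ^ 2 + β ^ 2 + γ ^ 2 = 33 / ((n : ℝ) + 20))
    (h2 : α ^ 2 * β ^ 2 + α ^ 2 * γ ^ 2 + β ^ 2 * γ ^ 2
      = 231 / (((n : ℝ) + 16) * ((n : ℝ) + 20)))
    (h3 : α ^ 2 * β ^ 2 * γ ^ 2
      = 231 / (((n : ℝ) + 12) * ((n : ℝ) + 16) * ((n : ℝ) + 20)))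
    (hrat : ∃ r : ℚ, α * β * γ = (r : ℝ)) :
    ∃ y : ℤ, (n + 12) * (n + 16) * (n + 20) = 231 * y ^ 2 ∧
      (231 * (n + 16)) * ((231 * (n + 16)) ^ 2 - 462 ^ 2) = (231 ^ 2 * y) ^ 2 := by
  obtain ⟨r, hr⟩ := hrat
  have hn' : (439 : ℝ) ≤ n := by exact_mod_cast hn
  have hP : (((n : ℝ) + 12) * ((n : ℝ) + 16) * ((n : ℝ) + 20)) ≠ 0 := by positivity
  rw [← mul_pow, ← mul_pow, hr, eq_div_iff hP] at h3
  obtain ⟨y, hy⟩ := exists_eq_231_mul_sq (P := (n + 12) * (n + 16) * (n + 20)) (r := r)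
    (by exact_mod_cast h3)
  exact absurd (by linear_combination hy) (no_large_point (m := n + 16) (y := y) (by omega))
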